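/- Let K be a finite field with 64 elements and let k ⊆ K be its unique subfield with 4 elements. For all x, y ∈ K with x ∉ k and y ∉ k, there exists a matrix A = (a_{ij}) ∈ GL₂(k) such that a₂₁x + a₂₂ ≠ 0 and (a₁₁x + a₁₂)/(a₂₁x + a₂₂) = y. (That is, PGL₂(k) acts transitively by fractional linear transformations on the elements of K not lying in k.) -/

import Mathlib

/-!
Since `[K : k] = 3`, the four elements `x, 1, y * x, y` of `K` are linearly dependent over `k`
(here: `4 ^ 4 > 64`, so two distinct coefficient vectors give the same combination). This is a
nontrivial relation `a x + b = (c x + d) y` with coefficients in `k`. As `x ∉ k`, a zero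
denominator `c x + d` forces `c = d = 0` and then `a = b = 0`; as `y ∉ k`, the rows `(a, b)` and
`(c, d)` are not proportional.
-/

/-- A linear form in `x ∉ k` with coefficients in `k` vanishes only if its coefficients do. -/
lemma coeffs_eq_zero {K : Type*} [Field K] {k : Subfield K} {x a b : K} (hx : x ∉ k)
    (ha : a ∈ k) (hb : b ∈ k) (h : a * x + b = 0) : a = 0 ∧ b = 0 := by
  have ha0 : a = 0 := by
    by_contra h0
    apply hx
    have : x = -b / a := by
      field_simp
      linear_combination h
    rw [this]
    exact k.div_mem (k.neg_mem hb) ha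
  subst ha0
  exact ⟨rfl, by simpa using h⟩

/-- The dependence relation of `x, 1, y * x, y` over `k`, obtained by the pigeonhole principle. -/
lemma exists_relation {K : Type*} [Field K] (hK : Nat.card K = 64)
    (k : Subfield K) (hk : Nat.card k = 4) (x y : K) :
    ∃ a ∈ k, ∃ b ∈ k, ∃ c ∈ k, ∃ d ∈ k, a * x + b = (c * x + d) * y ∧
      ¬ (a = 0 ∧ b = 0 ∧ c = 0 ∧ d = 0) := by
  have : Finite K := Nat.finite_of_card_ne_zero (by omega)
  let f : k × k × k × k → K := fun p => p.1 * x + p.2.1 - (p.2.2.1 * x + p.2.2.2) * y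
  have hf : ¬ Function.Injective f := by
    intro h
    have := Nat.card_le_card_of_injective f h
    simp only [Nat.card_prod, hk, hK] at this
    omega
  rw [Function.not_injective_iff] at hf
  obtain ⟨⟨a, b, c, d⟩, ⟨a', b', c', d'⟩, h, hne⟩ := hf
  refine ⟨a - a', (a - a').2, b - b', (b - b').2, c - c', (c - c').2, d - d', (d - d').2, ?_, ?_⟩
  · simp only [f] at h
    linear_combination h
  · rintro ⟨h1, h2, h3, h4⟩
    apply hne
    simp only [Prod.mk.injEq, Subtype.ext_iff]
    exact ⟨sub_eq_zero.1 h1, sub_eq_zero.1 h2, sub_eq_zero.1 h3, sub_eq_zero.1 h4⟩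


/-- Let `K` be the field with 64 elements and `k ⊆ K` its subfield with 4
elements. For all `x, y ∈ K ∖ k` there is an invertible 2×2 matrix `A` with entries in `k`
whose fractional linear transformation sends `x` to `y`:
`a₂₁x + a₂₂ ≠ 0` and `(a₁₁x + a₁₂)/(a₂₁x + a₂₂) = y`. -/
theorem stmt_10 (K : Type*) [Field K] (hK : Nat.card K = 64)
    (k : Subfield K) (hk : Nat.card k = 4)
    (x y : K) (hx : x ∉ k) (hy : y ∉ k) :
    ∃ A : Matrix (Fin 2) (Fin 2) K, (∀ i j, A i j ∈ k) ∧ A.det ≠ 0 ∧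
      A 1 0 * x + A 1 1 ≠ 0 ∧ (A 0 0 * x + A 0 1) / (A 1 0 * x + A 1 1) = y := by
  obtain ⟨a, ha, b, hb, c, hc, d, hd, h, hne⟩ := exists_relation hK k hk x y
  have hden : c * x + d ≠ 0 := by
    intro h0
    obtain ⟨rfl, rfl⟩ := coeffs_eq_zero hx hc hd h0
    obtain ⟨rfl, rfl⟩ := coeffs_eq_zero hx ha hb (by simpa using h)
    simp at hne
  refine ⟨!![a, b; c, d], ?_, ?_, by simpa using hden, ?_⟩
  · intro i j
    fin_cases i <;> fin_cases j <;> simpa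
  · rw [Matrix.det_fin_two_of]
    intro hdet
    -- If `a d = b c`, then `c y = a` and `d y = b`, so both `c` and `d` vanish since `y ∉ k`.
    have hcy : c * y + -a = 0 := by
      apply (mul_eq_zero.1 (?_ : (c * x + d) * (c * y + -a) = 0)).resolve_left hden
      linear_combination (-c) * h - hdet
    have hdy : d * y + -b = 0 := by
      apply (mul_eq_zero.1 (?_ : (c * x + d) * (d * y + -b) = 0)).resolve_left hden
      linear_combination (-d) * h + x * hdet
    apply hden
    rw [(coeffs_eq_zero hy hc (k.neg_mem ha) hcy).1, (coeffs_eq_zero hy hd (k.neg_mem hb) hdy).1]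
    simp
  · simpa using (div_eq_iff hden).2 (h.trans (mul_comm _ _))
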